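/- arXiv:1502.06467 — 4 statements merged into one kernel-verified Lean document; each statement's English description precedes it below -/
import Mathlib

section
/- Let L be a first-order language and M a definably well-ordered L-structure. Then M has uniform elimination of imaginaries in the following sense: for every equivalence relation E on M^m whose graph is a subset of M^{2m} definable with parameters, there exists a function f : M^m → M^m whose graph is definable with parameters such that for all x, y ∈ M^m one has (x, f(x)) ∈ E, and (x,y) ∈ E if and only if f(x) = f(y). -/
open FirstOrder FirstOrder.Language

/-- An `L`-structure `M` is definably well-ordered if there is a binary relation `⊲` on `M`,
definable with parameters as a subset of `M²`, which is a strict linear order on `M` such that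
every nonempty subset of `M` definable with parameters has a `⊲`-least element. -/
def FirstOrder.Language.DefinablyWellOrdered (L : FirstOrder.Language) (M : Type*)
    [L.Structure M] : Prop :=
  ∃ r : M → M → Prop,
    (Set.univ : Set M).Definable₂ L {p : M × M | r p.1 p.2} ∧
    (∀ a : M, ¬ r a a) ∧
    (∀ a b c : M, r a b → r b c → r a c) ∧
    (∀ a b : M, a = b ∨ r a b ∨ r b a) ∧
    (∀ s : Set M, (Set.univ : Set M).Definable₁ L s → s.Nonempty →
      ∃ a ∈ s, ∀ b ∈ s, a = b ∨ r a b)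

/-!
Each equivalence class is represented by its lexicographically least tuple, which is built one
coordinate at a time: the least first coordinate of a member of the class is a definable function
of the class, and fixing it leaves a definable family of sets of shorter tuples. Since these choices
depend only on the class as a set, equivalent tuples get the same representative.
-/

section Definable

variable {L : FirstOrder.Language} {M : Type*} [L.Structure M] {A : Set M} {α β : Type*}

theorem definable_sumGraph_of_definableMap [Finite α] [Finite β] {f : (α → M) → β → M}
    (hf : A.DefinableMap L f) :
    A.Definable L {z : α ⊕ β → M | z ∘ Sum.inr = f (z ∘ Sum.inl)} := by
  have hinl : A.DefinableMap L fun z : α ⊕ β → M => z ∘ Sum.inl := fun _ => .proj L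
  have hcoord (i : β) : A.Definable L {z : α ⊕ β → M | z (Sum.inr i) = f (z ∘ Sum.inl) i} :=
    (Set.DefinableFun.proj L).ofPred_eq ((hf i).comp hinl)
  convert Set.definable_iInter_of_finite hcoord using 1
  ext z
  simp [funext_iff]

theorem definable₁_fiber [Finite α] {P : (α → M) → Set M}
    (hP : A.Definable L {w : Option α → M | w none ∈ P (w ∘ some)}) {x : α → M}
    (hx : ∀ i, x i ∈ A) : A.Definable₁ L (P x) := by
  have hinsert : A.DefinableMap L fun (v : Fin 1 → M) (o : Option α) => o.elim (v 0) x := by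
    rintro (_ | i)
    · exact .proj L
    · exact L.definableFun_const _ (hx i)
  exact hP.preimage_map hinsert

theorem definable_isLeast [LE M] (hle : A.Definable₂ L {p : M × M | p.1 ≤ p.2})
    {P : (α → M) → Set M} (hP : A.Definable L {w : Option α → M | w none ∈ P (w ∘ some)}) :
    A.Definable L {w : Option α → M | IsLeast (P (w ∘ some)) (w none)} := by
  have hnone_le : A.Definable L {v : Option α ⊕ Fin 1 → M | v (Sum.inl none) ≤ v (Sum.inr 0)} :=
    Set.Definable.preimage_comp ![Sum.inl none, Sum.inr 0] hle
  have hmem : A.Definable L {v : Option α ⊕ Fin 1 → M | v (Sum.inr 0) ∈ P (v ∘ Sum.inl ∘ some)} :=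
    hP.preimage_comp fun o : Option α => o.elim (Sum.inr 0) (Sum.inl ∘ some)
  convert hP.inter (hmem.compl.union hnone_le).forall_of_finite using 1
  ext w
  exact and_congr_right fun _ =>
    ⟨fun h u => imp_iff_not_or.1 (@h (u 0)), fun h b => imp_iff_not_or.2 (h fun _ => b)⟩

end Definable

/-- A uniformly definable family of subsets of `M^β` indexed by `M^α`: its total space, a subset of
`M^(α ⊕ β)`, is definable with parameters in `A`. The classes of a definable equivalence relation
form such a family. -/
def IsDefinableFamily (L : FirstOrder.Language) {M : Type*} [L.Structure M] (A : Set M)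
    {α β : Type*} (S : (α → M) → Set (β → M)) : Prop :=
  A.Definable L {z : α ⊕ β → M | z ∘ Sum.inr ∈ S (z ∘ Sum.inl)}

namespace IsDefinableFamily

variable {L : FirstOrder.Language} {M : Type*} [L.Structure M] {A : Set M} {α : Type*}

theorem definable_image_eval {β : Type*} [Finite β] {S : (α → M) → Set (β → M)}
    (hS : IsDefinableFamily L A S) (i : β) :
    A.Definable L {w : Option α → M | w none ∈ Function.eval i '' S (w ∘ some)} := by
  have hmem : A.Definable L {v : Option α ⊕ β → M | v ∘ Sum.inr ∈ S (v ∘ Sum.inl ∘ some)} :=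
    hS.preimage_comp (Sum.map some id)
  have heval : A.Definable L {v : Option α ⊕ β → M | v (Sum.inr i) = v (Sum.inl none)} :=
    (Set.DefinableFun.proj L).ofPred_eq (.proj L)
  exact (hmem.inter heval).exists_of_finite

theorem preimage_cons [Finite α] {n : ℕ} {S : (α → M) → Set (Fin (n + 1) → M)}
    (hS : IsDefinableFamily L A S) {g : (α → M) → M} (hg : A.DefinableFun L g) :
    IsDefinableFamily L A fun x =>
      {t : Fin n → M | (Fin.cons (g x) t : Fin (n + 1) → M) ∈ S x} := by
  have hinl : A.DefinableMap L fun z : α ⊕ Fin n → M => z ∘ Sum.inl := fun _ => .proj L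
  have hcons : A.DefinableMap L fun z : α ⊕ Fin n → M =>
      Sum.elim (z ∘ Sum.inl) (Fin.cons (g (z ∘ Sum.inl)) (z ∘ Sum.inr) : Fin (n + 1) → M) := by
    rintro (_ | i)
    · exact .proj L
    · cases i using Fin.cases
      · exact hg.comp hinl
      · exact .proj L
  exact Set.Definable.preimage_map hcons hS

end IsDefinableFamily

/-- The given partial order of `M` is a definable well-order: its graph is definable with parameters
and every nonempty subset of `M` definable with parameters has a least element. It is automatically
linear because pairs are definable. This recasts `DefinablyWellOrdered` in terms of an order
instance, so that `IsLeast` applies. -/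
structure IsDefinableWellOrder (L : FirstOrder.Language) (M : Type*) [L.Structure M]
    [PartialOrder M] : Prop where
  definable_le : (Set.univ : Set M).Definable₂ L {p : M × M | p.1 ≤ p.2}
  exists_isLeast : ∀ s : Set M, (Set.univ : Set M).Definable₁ L s → s.Nonempty →
    ∃ a, IsLeast s a

namespace IsDefinableWellOrder

variable {L : FirstOrder.Language} {M : Type*} [L.Structure M] [PartialOrder M]
  {α : Type*} [Finite α]

theorem exists_definableFun_isLeast (hM : IsDefinableWellOrder L M) {P : (α → M) → Set M}
    (hP : (Set.univ : Set M).Definable L {w : Option α → M | w none ∈ P (w ∘ some)})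
    (hne : ∀ x, (P x).Nonempty) :
    ∃ g : (α → M) → M, (Set.univ : Set M).DefinableFun L g ∧ ∀ x, IsLeast (P x) (g x) := by
  have hdef (x : α → M) : (Set.univ : Set M).Definable₁ L (P x) :=
    definable₁_fiber hP fun _ => Set.mem_univ _
  choose g hg using fun x => hM.exists_isLeast (P x) (hdef x) (hne x)
  refine ⟨g, ?_, hg⟩
  have hgraph : g.tupleGraph = {w : Option α → M | IsLeast (P (w ∘ some)) (w none)} :=
    Set.ext fun w => (hg (w ∘ some)).isLeast_iff_eq.symm
  rw [Set.DefinableFun, hgraph]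
  exact definable_isLeast hM.definable_le hP

theorem exists_definableMap_invariant_choice (hM : IsDefinableWellOrder L M) {n : ℕ}
    {S : (α → M) → Set (Fin n → M)} (hS : IsDefinableFamily L Set.univ S)
    (hne : ∀ x, (S x).Nonempty) :
    ∃ f : (α → M) → Fin n → M, (Set.univ : Set M).DefinableMap L f ∧
      (∀ x, f x ∈ S x) ∧ ∀ x y, S x = S y → f x = f y := by
  induction n with
  | zero =>
    refine ⟨fun _ => Fin.elim0, fun i => i.elim0, fun x => ?_, fun _ _ _ => rfl⟩
    obtain ⟨t, ht⟩ := hne x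
    rwa [Subsingleton.elim Fin.elim0 t]
  | succ n ih =>
    obtain ⟨g, hg, hleast⟩ := hM.exists_definableFun_isLeast (hS.definable_image_eval 0)
      fun x => (hne x).image _
    have htail (x : α → M) :
        {t : Fin n → M | (Fin.cons (g x) t : Fin (n + 1) → M) ∈ S x}.Nonempty := by
      obtain ⟨u, hu, hu0⟩ := (hleast x).1
      refine ⟨Fin.tail u, ?_⟩
      rw [← hu0]
      simpa using hu
    obtain ⟨f, hf, hmem, hinv⟩ := ih (hS.preimage_cons hg) htail
    refine ⟨fun x => Fin.cons (g x) (f x), Fin.cases hg hf, hmem, fun x y hxy => ?_⟩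
    have hgxy : g x = g y := (hleast x).unique (hxy ▸ hleast y)
    have hfxy : f x = f y := hinv x y (by rw [hgxy, hxy])
    exact congrArg₂ Fin.cons hgxy hfxy

end IsDefinableWellOrder

theorem exists_isDefinableWellOrder_of_definablyWellOrdered {L : FirstOrder.Language} {M : Type*}
    [L.Structure M] (h : L.DefinablyWellOrdered M) :
    ∃ _ : PartialOrder M, IsDefinableWellOrder L M := by
  obtain ⟨r, hr, hirrefl, htrans, -, hmin⟩ := h
  have : IsStrictOrder M r := { irrefl := hirrefl, trans := htrans }
  let order : PartialOrder M := partialOrderOfSO r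
  exact ⟨order, (Set.Definable.diagonal L Set.univ).union hr, hmin⟩

/-- A definably well-ordered structure has uniform elimination of imaginaries: for every
definable equivalence relation `E` on `M^m` there is a definable function `f : M^m → M^m` such
that `(x, f x) ∈ E` for all `x`, and `(x, y) ∈ E ↔ f x = f y`. -/
theorem definablyWellOrdered_elimination_of_imaginaries (L : FirstOrder.Language) (M : Type*)
    [L.Structure M] [Nonempty M] (h : L.DefinablyWellOrdered M) (m : ℕ)
    (E : (Fin m → M) → (Fin m → M) → Prop) (hE : Equivalence E)
    (hEdef : (Set.univ : Set M).Definable L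
      {z : (Fin m ⊕ Fin m) → M | E (fun i => z (Sum.inl i)) (fun i => z (Sum.inr i))}) :
    ∃ f : (Fin m → M) → (Fin m → M),
      (Set.univ : Set M).Definable L
        {z : (Fin m ⊕ Fin m) → M | (fun i => z (Sum.inr i)) = f (fun i => z (Sum.inl i))} ∧
      (∀ x : Fin m → M, E x (f x)) ∧
      (∀ x y : Fin m → M, E x y ↔ f x = f y) := by
  obtain ⟨_, hM⟩ := exists_isDefinableWellOrder_of_definablyWellOrdered h
  obtain ⟨f, hf, hmem, hinv⟩ :=
    hM.exists_definableMap_invariant_choice (S := fun x => {y | E x y}) hEdef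
      fun x => ⟨x, hE.refl x⟩
  refine ⟨f, definable_sumGraph_of_definableMap hf, hmem, fun x y => ⟨fun hxy => ?_, fun hxy => ?_⟩⟩
  · have hclass : {z | E x z} = {z | E y z} :=
      Set.ext fun z => ⟨hE.trans (hE.symm hxy), hE.trans hxy⟩
    exact hinv x y hclass
  · have hyx : E y (f x) := hxy ▸ hmem y
    exact hE.trans (hmem x) (hE.symm hyx)
end

section
/- The structure (ℤ, +, −, <, 0, 1) has definable choice: for every subset X ⊆ ℤ^m × ℤ^n definable with parameters in the first-order structure (ℤ, +, −, <, 0, 1), there exists a function f : ℤ^m → ℤ^n whose graph is definable with parameters in (ℤ, +, −, <, 0, 1), such that for every x ∈ ℤ^m with nonempty fiber X_x := {t ∈ ℤ^n : (x,t) ∈ X} one has (x, f(x)) ∈ X, and f(x) = f(y) whenever X_x = X_y. -/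
open FirstOrder FirstOrder.Language

/-- Function symbols of the Presburger language: `0`, `1`, `+`, `−`. -/
inductive PresburgerFunc : ℕ → Type
  | zero : PresburgerFunc 0
  | one : PresburgerFunc 0
  | add : PresburgerFunc 2
  | sub : PresburgerFunc 2

/-- Relation symbols of the Presburger language: `<`. -/
inductive PresburgerRel : ℕ → Type
  | lt : PresburgerRel 2

/-- The first-order language `(+, −, <, 0, 1)` of Presburger arithmetic. -/
def Presburger : FirstOrder.Language :=
  ⟨PresburgerFunc, PresburgerRel⟩

/-- The standard interpretation of `(+, −, <, 0, 1)` on `ℤ`. -/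
instance : Presburger.Structure ℤ where
  funMap {_} f v :=
    match f with
    | .zero => 0
    | .one => 1
    | .add => v 0 + v 1
    | .sub => v 0 - v 1
  RelMap {_} r v :=
    match r with
    | .lt => v 0 < v 1

/-!
The order `0, 1, 2, …, -1, -2, …` of type `ω + ω` is a well-order of `ℤ` definable from `<` and `0`.
Its lexicographic power is a definable well-order of `ℤ^n`, so sending `x` to the least element of
the fiber `X_x` is a definable function that depends only on the set `X_x`. Enlarging `X` by
`{x} × ℤ^n` for every `x` with empty fiber makes all fibers nonempty and preserves definability,
and it sends equal fibers to equal fibers.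
-/

section DefinableChoice

variable {M : Type*} {L : FirstOrder.Language} [L.Structure M] {A : Set M} {α β γ : Type*}
  {X : Set (α ⊕ β → M)} {x y : α → M}

/-- The fiber `X_x = {t | (x, t) ∈ X}` of `X ⊆ M^α × M^β` over `x`, where `M^α × M^β` is encoded
as `α ⊕ β → M`. -/
def fiber (X : Set (α ⊕ β → M)) (x : α → M) : Set (β → M) :=
  {t | Sum.elim x t ∈ X}

variable (L A) in
/-- `f` is a definable choice function for the family of fibers of `X`: its graph is
`A`-definable, it selects a point of every nonempty fiber, and it depends on the fiber only. -/
structure IsDefinableChoice (X : Set (α ⊕ β → M)) (f : (α → M) → β → M) : Prop where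
  definable_graph : A.Definable L {z : α ⊕ β → M | z ∘ Sum.inr = f (z ∘ Sum.inl)}
  apply_mem_fiber : ∀ x, (fiber X x).Nonempty → f x ∈ fiber X x
  apply_eq_of_fiber_eq : ∀ x y, fiber X x = fiber X y → f x = f y

theorem comp_inr_mem_fiber_comp_inl {z : α ⊕ β → M} :
    z ∘ Sum.inr ∈ fiber X (z ∘ Sum.inl) ↔ z ∈ X := by
  rw [fiber, Set.mem_ofPred_eq, Sum.elim_comp_inl_inr]

theorem definable_exists_mem_fiber [Finite β] (hX : A.Definable L X) {P : Set (γ ⊕ β → M)}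
    (hP : A.Definable L P) (g : α → γ) :
    A.Definable L {z : γ → M | ∃ t ∈ fiber X (z ∘ g), Sum.elim z t ∈ P} := by
  convert! ((hX.preimage_comp (Sum.map g id)).inter hP).exists_of_finite using 5
  simp only [fiber, Set.mem_ofPred_eq, Set.mem_inter_iff, Set.mem_preimage, Sum.elim_comp_map,
    Function.comp_id]

/-- The set `X` enlarged by the full fiber `M^β` over every point whose fiber is empty. -/
def fillEmptyFibers (X : Set (α ⊕ β → M)) : Set (α ⊕ β → M) :=
  {z | (fiber X (z ∘ Sum.inl)).Nonempty → z ∈ X}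

theorem definable_fillEmptyFibers [Finite β] (hX : A.Definable L X) :
    A.Definable L (fillEmptyFibers X) := by
  convert! (definable_exists_mem_fiber hX Set.definable_univ Sum.inl).himp hX using 1
  ext z
  simp [fillEmptyFibers, Set.Nonempty, himp_eq, imp_iff_or_not]

theorem fiber_fillEmptyFibers (X : Set (α ⊕ β → M)) (x : α → M) :
    fiber (fillEmptyFibers X) x = {t | (fiber X x).Nonempty → t ∈ fiber X x} :=
  rfl

theorem fiber_fillEmptyFibers_of_nonempty (hx : (fiber X x).Nonempty) :
    fiber (fillEmptyFibers X) x = fiber X x := by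
  simp [fiber_fillEmptyFibers, hx]

theorem fiber_fillEmptyFibers_nonempty [Nonempty M] (X : Set (α ⊕ β → M)) (x : α → M) :
    (fiber (fillEmptyFibers X) x).Nonempty := by
  by_cases hx : (fiber X x).Nonempty
  · rwa [fiber_fillEmptyFibers_of_nonempty hx]
  · simp [fiber_fillEmptyFibers, hx]

theorem fiber_fillEmptyFibers_congr (h : fiber X x = fiber X y) :
    fiber (fillEmptyFibers X) x = fiber (fillEmptyFibers X) y := by
  rw [fiber_fillEmptyFibers, fiber_fillEmptyFibers, h]

theorem eq_wellFounded_min_iff {ι : Type*} {r : ι → ι → Prop} [Std.Trichotomous r]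
    (wf : WellFounded r) {s : Set ι} (hs : s.Nonempty) {a : ι} :
    a = wf.min s hs ↔ a ∈ s ∧ ∀ b ∈ s, ¬ r b a := by
  refine ⟨?_, fun ⟨has, hmin⟩ => (wf.min_eq_of_forall_not_lt has hmin).symm⟩
  rintro rfl
  exact ⟨wf.min_mem s hs, fun b hb => wf.not_lt_min s hb⟩

theorem definable_graph_min_fiber [Finite β] {r : (β → M) → (β → M) → Prop}
    [Std.Trichotomous r] (wf : WellFounded r)
    (hr : A.Definable L {w : β ⊕ β → M | r (w ∘ Sum.inl) (w ∘ Sum.inr)})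
    (hX : A.Definable L X) (hne : ∀ x, (fiber X x).Nonempty) :
    A.Definable L
      {z : α ⊕ β → M | z ∘ Sum.inr = wf.min (fiber X (z ∘ Sum.inl)) (hne (z ∘ Sum.inl))} := by
  have hlt : A.Definable L {w : (α ⊕ β) ⊕ β → M | r (w ∘ Sum.inr) (w ∘ Sum.inl ∘ Sum.inr)} :=
    hr.preimage_comp (Sum.elim Sum.inr (Sum.inl ∘ Sum.inr))
  convert! hX.inter (definable_exists_mem_fiber hX hlt Sum.inl).compl using 1
  ext z
  simp only [Set.mem_ofPred_eq, eq_wellFounded_min_iff, comp_inr_mem_fiber_comp_inl,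
    Set.mem_inter_iff, Set.mem_compl_iff, not_exists, not_and, Sum.elim_comp_inr,
    ← Function.comp_assoc, Sum.elim_comp_inl]

theorem isWellOrder_piLex {ι : Type*} [Finite ι] {N : ι → Type*} (s : ι → ι → Prop)
    [IsStrictTotalOrder ι s] (r : ∀ i, N i → N i → Prop) [∀ i, IsWellOrder (N i) (r i)] :
    IsWellOrder (∀ i, N i) (Pi.Lex s (fun {i} => r i)) where
  wf := Pi.Lex.wellFounded s fun i => (inferInstance : IsWellOrder (N i) (r i)).wf
  trichotomous := (Pi.trichotomous_lex s (fun {i} => r i)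
    (Finite.wellFounded_of_trans_of_irrefl s)).trichotomous

theorem definable_rel_apply_apply {r : M → M → Prop} (hr : A.Definable₂ L {p | r p.1 p.2})
    (i j : α) : A.Definable L {v : α → M | r (v i) (v j)} :=
  hr.preimage_comp ![i, j]

theorem definable_piLex [Finite β] (s : β → β → Prop) {r : M → M → Prop}
    (hr : A.Definable₂ L {p | r p.1 p.2}) :
    A.Definable L {w : β ⊕ β → M | Pi.Lex s r (w ∘ Sum.inl) (w ∘ Sum.inr)} := by
  have agree_before (i : β) :
      A.Definable L {w : β ⊕ β → M | ∀ j : {j // s j i}, w (Sum.inl j) = w (Sum.inr j)} := by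
    rw [Set.ofPred_forall]
    exact Set.definable_iInter_of_finite fun j =>
      (Set.DefinableFun.proj L).ofPred_eq (Set.DefinableFun.proj L)
  simp only [Pi.Lex, Set.ofPred_exists]
  refine Set.definable_iUnion_of_finite fun i => ?_
  simpa only [Subtype.forall] using!
    (agree_before i).inter (definable_rel_apply_apply hr (Sum.inl i) (Sum.inr i))

theorem exists_isDefinableChoice_of_definable_isWellOrder [Nonempty M] [Finite β]
    (r : M → M → Prop) [IsWellOrder M r] (hr : A.Definable₂ L {p | r p.1 p.2})
    (hX : A.Definable L X) : ∃ f, IsDefinableChoice L A X f := by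
  have hlex : IsWellOrder (β → M) (Pi.Lex WellOrderingRel r) := isWellOrder_piLex _ fun _ => r
  have hne := fiber_fillEmptyFibers_nonempty X
  refine ⟨fun x => hlex.wf.min (fiber (fillEmptyFibers X) x) (hne x),
    definable_graph_min_fiber hlex.wf (definable_piLex _ hr) (definable_fillEmptyFibers hX) hne,
    fun x hx => ?_, fun x y h => ?_⟩
  · simpa only [fiber_fillEmptyFibers_of_nonempty hx] using hlex.wf.min_mem _ (hne x)
  · simp only [fiber_fillEmptyFibers_congr h]

end DefinableChoice

section Presburger

variable {A : Set ℤ} {α β : Type*}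

theorem definable_realize_lt_realize (s t : Presburger.Term α) :
    A.Definable Presburger {v : α → ℤ | s.realize v < t.realize v} := by
  let ltSymbol : Presburger.Relations 2 := PresburgerRel.lt
  refine Set.Definable.mono (Set.empty_definable_iff.2 ⟨ltSymbol.formula₂ s t, ?_⟩)
    (Set.empty_subset A)
  ext v
  rw [Set.mem_ofPred_eq, Set.mem_ofPred_eq, Formula.realize_rel₂]
  rfl

theorem definable_apply_lt_apply (i j : α) :
    A.Definable Presburger {v : α → ℤ | v i < v j} :=
  definable_realize_lt_realize (Term.var i) (Term.var j)

theorem definable_apply_neg (i : α) : A.Definable Presburger {v : α → ℤ | v i < 0} :=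
  definable_realize_lt_realize (Term.var i) (Constants.term (L := Presburger) PresburgerFunc.zero)

/-- The strict well-order `0, 1, 2, …, -1, -2, …` of `ℤ`, written as a formula in `<` and `0`. -/
def NonnegFirstLT (a b : ℤ) : Prop :=
  (0 ≤ a ∧ (a < b ∨ b < 0)) ∨ (a < 0 ∧ b < a)

theorem nonnegFirstLT_iff_sumLex (a b : ℤ) :
    NonnegFirstLT a b ↔
      Sum.Lex (· < ·) (· < ·) (Equiv.intEquivNatSumNat a) (Equiv.intEquivNatSumNat b) := by
  have equiv_natCast (n : ℕ) : Equiv.intEquivNatSumNat n = Sum.inl n := rfl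
  have equiv_negSucc (n : ℕ) : Equiv.intEquivNatSumNat (Int.negSucc n) = Sum.inr n := rfl
  cases a <;> cases b <;>
    simp only [NonnegFirstLT, Int.ofNat_eq_natCast, equiv_natCast, equiv_negSucc,
      Sum.lex_inl_inl, Sum.lex_inr_inr, Sum.lex_inr_inl, Sum.Lex.sep, iff_true, iff_false] <;>
    omega

instance : IsWellOrder ℤ NonnegFirstLT := by
  convert! Equiv.intEquivNatSumNat.injective.isWellOrder (Sum.Lex (· < ·) (· < ·))
  ext a b
  exact nonnegFirstLT_iff_sumLex a b

theorem definable₂_nonnegFirstLT :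
    A.Definable₂ Presburger {p | NonnegFirstLT p.1 p.2} := by
  have neg (i : Fin 2) : A.Definable Presburger {v | v i < 0} := definable_apply_neg i
  have lt (i j : Fin 2) : A.Definable Presburger {v | v i < v j} := definable_apply_lt_apply i j
  rw [Set.Definable₂]
  convert! ((neg 0).compl.inter ((lt 0 1).union (neg 1))).union ((neg 0).inter (lt 1 0)) using 1
  ext v
  simp [NonnegFirstLT]

theorem presburger_definable_choice_general [Finite β] {X : Set (α ⊕ β → ℤ)}
    (hX : A.Definable Presburger X) : ∃ f, IsDefinableChoice Presburger A X f :=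
  exists_isDefinableChoice_of_definable_isWellOrder NonnegFirstLT definable₂_nonnegFirstLT hX

end Presburger

/-- The structure `(ℤ, +, −, <, 0, 1)` has definable choice: for every `X ⊆ ℤ^m × ℤ^n`
definable with parameters there is a function `f : ℤ^m → ℤ^n` with definable graph such that
`(x, f x) ∈ X` whenever the fiber `X_x` is nonempty, and `f x = f y` whenever `X_x = X_y`. -/
theorem presburger_definable_choice (m n : ℕ) (X : Set ((Fin m ⊕ Fin n) → ℤ))
    (hX : (Set.univ : Set ℤ).Definable Presburger X) :
    ∃ f : (Fin m → ℤ) → (Fin n → ℤ),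
      (Set.univ : Set ℤ).Definable Presburger
        {z : (Fin m ⊕ Fin n) → ℤ | (fun i => z (Sum.inr i)) = f (fun i => z (Sum.inl i))} ∧
      (∀ x : Fin m → ℤ, {t : Fin n → ℤ | Sum.elim x t ∈ X}.Nonempty → Sum.elim x (f x) ∈ X) ∧
      (∀ x y : Fin m → ℤ,
        {t : Fin n → ℤ | Sum.elim x t ∈ X} = {t : Fin n → ℤ | Sum.elim y t ∈ X} → f x = f y) :=
  let ⟨f, hf⟩ := presburger_definable_choice_general hX
  ⟨f, hf.definable_graph, hf.apply_mem_fiber, hf.apply_eq_of_fiber_eq⟩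
end

section
/- Let p be a prime and let S ⊆ ℤ^m be a Presburger-definable set, i.e., definable with parameters in the first-order structure (ℤ, +, −, <, 0, 1). Then the set ord^{-1}(S) := {(x₁, …, xₘ) ∈ (ℚ_p \ {0})^m : (ord x₁, …, ord xₘ) ∈ S} is definable with parameters in the language of rings L_ring on the field ℚ_p. -/
open FirstOrder FirstOrder.Language FirstOrder.Ring

/-!
The valuation interprets the Presburger structure `ℤ` in the field `ℚ_p`, with domain `ℚ_p \ {0}`.
The only relation that takes work is the order, and `ord x ≤ ord y` holds if and only if
`x ^ 4 + p ^ 3 * y ^ 4` is a square: if `ord x ≤ ord y`, this sum is `x ^ 4 * (1 + p ^ 3 * c)` with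
`c` integral, and the second factor is a square by Hensel's lemma; otherwise the sum has the odd
order `3 + 4 * ord y`. Addition in `ℤ` becomes multiplication in `ℚ_p`, and quantifiers over `ℤ`
become quantifiers over `ℚ_p \ {0}`, since the valuation is onto.
-/

open Set

section DefinablePullback

variable {M N α β ι : Type*} {L K : FirstOrder.Language} [L.Structure M] [K.Structure N]

theorem definable_preimage_term {A : Set M} {s : Set (ι → M)} (hs : A.Definable L s)
    (t : ι → L.Term (A ⊕ β)) :
    A.Definable L {x : β → M | (fun j => (t j).realize (Sum.elim (↑) x)) ∈ s} := by
  obtain ⟨φ, rfl⟩ := definable_iff_exists_formula_sum.1 hs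
  refine definable_iff_exists_formula_sum.2
    ⟨BoundedFormula.subst φ (Sum.elim (Term.var ∘ Sum.inl) t), ext fun x => ?_⟩
  simp only [mem_ofPred_eq, Formula.Realize, BoundedFormula.realize_subst]
  congr! 1
  funext i
  cases i <;> rfl

theorem definable_setOf_forall_mem [Finite α] {A D : Set M} (hD : A.Definable₁ L D) :
    A.Definable L {x : α → M | ∀ i, x i ∈ D} := by
  have hcoord (i : α) : A.Definable L {x : α → M | x i ∈ D} := hD.preimage_comp fun _ => i
  simpa only [ofPred_forall] using definable_iInter_of_finite hcoord

variable (L) in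
/-- The preimage of `S` under the coordinatewise map induced by `f : M → N` agrees on tuples from
the domain `D` with a set definable over `A`. Ignoring the tuples outside `D` keeps this notion
closed under complements, and makes it meaningful for infinite index types. -/
def DefinablePullback (A D : Set M) (f : M → N) (S : Set (α → N)) : Prop :=
  ∃ T : Set (α → M), A.Definable L T ∧ ∀ x : α → M, (∀ i, x i ∈ D) → (x ∈ T ↔ f ∘ x ∈ S)

/-- On tuples from the domain `D`, the `L`-term `t` with parameters in `A` takes values in `D` and
induces, through `f : M → N`, the function `g`. -/
def TermInduces (A D : Set M) (f : M → N) (t : L.Term (A ⊕ α)) (g : (α → N) → N) : Prop :=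
  ∀ x : α → M, (∀ i, x i ∈ D) →
    t.realize (Sum.elim (↑) x) ∈ D ∧ f (t.realize (Sum.elim (↑) x)) = g (f ∘ x)

variable (L) in
/-- The graph of `g` has a definable pullback; the value of `g` is the coordinate `none`. -/
def DefinablePullbackFun (A D : Set M) (f : M → N) (g : (α → N) → N) : Prop :=
  DefinablePullback L A D f {x : Option α → N | x none = g (x ∘ some)}

variable {A D : Set M} {f : M → N}

theorem termInduces_var (i : α) :
    TermInduces A D f (Term.var (Sum.inr i) : L.Term (A ⊕ α)) fun x => x i :=
  fun _ hx => ⟨hx i, rfl⟩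

theorem termInduces_param {a : M} {b : N} (haA : a ∈ A) (haD : a ∈ D) (hab : f a = b) :
    TermInduces A D f (Term.var (Sum.inl ⟨a, haA⟩) : L.Term (A ⊕ α)) fun _ => b :=
  fun _ _ => ⟨haD, hab⟩

namespace DefinablePullback

variable {S S₁ S₂ : Set (α → N)}

theorem empty : DefinablePullback L A D f (∅ : Set (α → N)) :=
  ⟨∅, definable_empty, fun _ _ => Iff.rfl⟩

theorem compl (hS : DefinablePullback L A D f S) : DefinablePullback L A D f Sᶜ := by
  obtain ⟨T, hT, hTS⟩ := hS
  exact ⟨Tᶜ, hT.compl, fun x hx => (hTS x hx).not⟩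

theorem inter (h₁ : DefinablePullback L A D f S₁) (h₂ : DefinablePullback L A D f S₂) :
    DefinablePullback L A D f (S₁ ∩ S₂) := by
  obtain ⟨T₁, hT₁, hTS₁⟩ := h₁
  obtain ⟨T₂, hT₂, hTS₂⟩ := h₂
  exact ⟨T₁ ∩ T₂, hT₁.inter hT₂, fun x hx => and_congr (hTS₁ x hx) (hTS₂ x hx)⟩

theorem iInter [Finite ι] {S : ι → Set (α → N)} (hS : ∀ i, DefinablePullback L A D f (S i)) :
    DefinablePullback L A D f (⋂ i, S i) := by
  choose T hT hTS using hS
  refine ⟨⋂ i, T i, definable_iInter_of_finite hT, fun x hx => ?_⟩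
  simp only [mem_iInter, hTS _ x hx]

theorem preimage_term {S : Set (ι → N)} (hS : DefinablePullback L A D f S)
    {t : ι → L.Term (A ⊕ β)} {g : ι → (β → N) → N} (ht : ∀ j, TermInduces A D f (t j) (g j)) :
    DefinablePullback L A D f {z : β → N | (fun j => g j z) ∈ S} := by
  obtain ⟨T, hT, hTS⟩ := hS
  refine ⟨_, definable_preimage_term hT t, fun x hx => (hTS _ fun j => (ht j x hx).1).trans ?_⟩
  rw [mem_ofPred_eq, ← funext fun j => (ht j x hx).2]
  rfl

theorem preimage_comp (hS : DefinablePullback L A D f S) (e : α → β) :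
    DefinablePullback L A D f {y : β → N | y ∘ e ∈ S} :=
  hS.preimage_term fun i => termInduces_var (e i)

theorem exists_of_finite [Finite β] {S : Set (α ⊕ β → N)} (hS : DefinablePullback L A D f S)
    (hD : A.Definable₁ L D) (hf : SurjOn f D univ) :
    DefinablePullback L A D f {v : α → N | ∃ u : β → N, Sum.elim v u ∈ S} := by
  obtain ⟨T, hT, hTS⟩ := hS
  have hDβ : A.Definable L {x : α ⊕ β → M | ∀ j, x (Sum.inr j) ∈ D} :=
    (definable_setOf_forall_mem hD).preimage_comp Sum.inr
  refine ⟨_, (hT.inter hDβ).exists_of_finite, fun x hx => ?_⟩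
  have hTS_elim (y : β → M) (hy : ∀ j, y j ∈ D) :
      Sum.elim x y ∈ T ↔ Sum.elim (f ∘ x) (f ∘ y) ∈ S := by
    rw [hTS _ (Sum.forall.2 ⟨hx, hy⟩), Sum.comp_elim]
  constructor
  · rintro ⟨y, hyT, hyD⟩
    exact ⟨f ∘ y, (hTS_elim y hyD).1 hyT⟩
  · rintro ⟨u, hu⟩
    choose y hyD hyu using fun j => hf (mem_univ (u j))
    obtain rfl : f ∘ y = u := funext hyu
    exact ⟨y, (hTS_elim y hyD).2 hu, hyD⟩

theorem forall_of_finite [Finite β] {S : Set (α ⊕ β → N)} (hS : DefinablePullback L A D f S)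
    (hD : A.Definable₁ L D) (hf : SurjOn f D univ) :
    DefinablePullback L A D f {v : α → N | ∀ u : β → N, Sum.elim v u ∈ S} := by
  convert (hS.compl.exists_of_finite hD hf).compl using 1
  ext v
  simp

theorem preimage_fun [Finite ι] {S : Set (ι → N)} (hS : DefinablePullback L A D f S)
    (hD : A.Definable₁ L D) (hf : SurjOn f D univ) {h : ι → (β → N) → N}
    (hh : ∀ i, DefinablePullbackFun L A D f (h i)) :
    DefinablePullback L A D f {x : β → N | (fun i => h i x) ∈ S} := by
  have hgraph (i : ι) :
      DefinablePullback L A D f {y : β ⊕ ι → N | y (Sum.inr i) = h i (y ∘ Sum.inl)} :=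
    (hh i).preimage_comp fun o => o.elim (Sum.inr i) Sum.inl
  convert ((iInter hgraph).inter (hS.preimage_comp Sum.inr)).exists_of_finite hD hf using 1
  ext x
  simp [← funext_iff]

theorem definable_setOf [Finite α] (hS : DefinablePullback L A D f S) (hD : A.Definable₁ L D) :
    A.Definable L {x : α → M | (∀ i, x i ∈ D) ∧ f ∘ x ∈ S} := by
  obtain ⟨T, hT, hTS⟩ := hS
  convert (definable_setOf_forall_mem hD).inter hT using 1
  ext x
  exact and_congr_right fun hx => (hTS x hx).symm

end DefinablePullback

theorem TermInduces.definablePullback_eq {s t : L.Term (A ⊕ α)} {g h : (α → N) → N}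
    (hs : TermInduces A D f s g) (ht : TermInduces A D f t h)
    (h_eq : DefinablePullback L A D f {x : Fin 2 → N | x 0 = x 1}) :
    DefinablePullback L A D f {z | g z = h z} :=
  h_eq.preimage_term (t := ![s, t]) (g := ![g, h]) (Fin.forall_fin_two.2 ⟨hs, ht⟩)

namespace DefinablePullbackFun

theorem comp_left {g : (α → N) → N} (hg : DefinablePullbackFun L A D f g) (e : α → β) :
    DefinablePullbackFun L A D f fun x : β → N => g (x ∘ e) :=
  hg.preimage_comp (Option.map e)

theorem eval (h_eq : DefinablePullback L A D f {x : Fin 2 → N | x 0 = x 1}) (i : α) :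
    DefinablePullbackFun L A D f fun x : α → N => x i :=
  h_eq.preimage_comp ![none, some i]

theorem comp [Finite ι] {g : (ι → N) → N} (hg : DefinablePullbackFun L A D f g)
    (hD : A.Definable₁ L D) (hf : SurjOn f D univ)
    (h_eq : DefinablePullback L A D f {x : Fin 2 → N | x 0 = x 1}) {h : ι → (β → N) → N}
    (hh : ∀ i, DefinablePullbackFun L A D f (h i)) :
    DefinablePullbackFun L A D f fun x => g fun i => h i x :=
  DefinablePullback.preimage_fun hg hD hf
    (h := fun o x => o.elim (x none) fun i => h i (x ∘ some))
    (Option.forall.2 ⟨eval h_eq none, fun i => (hh i).comp_left some⟩)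

end DefinablePullbackFun

variable (L K) in
/-- The map `f`, restricted to the set `D ⊆ M`, is a one-dimensional interpretation over `A` of the
`K`-structure `N` in the `L`-structure `M`. Elements of `D` with the same image under `f` represent
the same element of `N`, so the equality of `N` has to be definable as well. -/
structure IsInterpretation (A D : Set M) (f : M → N) : Prop where
  definable_domain : A.Definable₁ L D
  surjOn : SurjOn f D univ
  eq : DefinablePullback L A D f {x : Fin 2 → N | x 0 = x 1}
  funMap : ∀ {n : ℕ} (F : K.Functions n),
    DefinablePullbackFun L A D f fun x : Fin n → N => Structure.funMap F x
  relMap : ∀ {n : ℕ} (R : K.Relations n),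
    DefinablePullback L A D f {x : Fin n → N | Structure.RelMap R x}

namespace IsInterpretation

theorem definablePullbackFun_realize_term (h : IsInterpretation L K A D f) (t : K.Term α) :
    DefinablePullbackFun L A D f fun x => t.realize x := by
  induction t with
  | var i => exact .eval h.eq i
  | func F ts ih => exact (h.funMap F).comp h.definable_domain h.surjOn h.eq ih

theorem definablePullback_realize_all {n : ℕ} {φ : K.BoundedFormula α (n + 1)}
    (h : IsInterpretation L K A D f)
    (hφ : DefinablePullback L A D f
      {x : α ⊕ Fin (n + 1) → N | φ.Realize (x ∘ Sum.inl) (x ∘ Sum.inr)}) :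
    DefinablePullback L A D f
      {x : α ⊕ Fin n → N | φ.all.Realize (x ∘ Sum.inl) (x ∘ Sum.inr)} := by
  let e : α ⊕ Fin (n + 1) → (α ⊕ Fin n) ⊕ Unit :=
    Sum.elim (Sum.inl ∘ Sum.inl) (Fin.snoc (Sum.inl ∘ Sum.inr) (Sum.inr ()))
  have comp_e (x : α ⊕ Fin n → N) (u : Unit → N) :
      Sum.elim x u ∘ e ∘ Sum.inr = Fin.snoc (x ∘ Sum.inr) (u ()) := by
    simp only [e, Sum.elim_comp_inr, Fin.comp_snoc]
    rfl
  convert (hφ.preimage_comp e).forall_of_finite h.definable_domain h.surjOn using 1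
  ext x
  simp only [BoundedFormula.realize_all, mem_ofPred_eq, Function.comp_assoc, comp_e]
  exact ⟨fun hx u => hx (u ()), fun hx a => hx fun _ => a⟩

theorem definablePullback_realize_boundedFormula {n : ℕ} (h : IsInterpretation L K A D f)
    (φ : K.BoundedFormula α n) :
    DefinablePullback L A D f
      {x : α ⊕ Fin n → N | φ.Realize (x ∘ Sum.inl) (x ∘ Sum.inr)} := by
  have realize_term (n : ℕ) (t : K.Term (α ⊕ Fin n)) := h.definablePullbackFun_realize_term t
  induction φ with
  | falsum => exact .empty
  | equal t₁ t₂ =>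
    convert h.eq.preimage_fun h.definable_domain h.surjOn (h := ![t₁.realize, t₂.realize])
      (Fin.forall_fin_two.2 ⟨realize_term _ t₁, realize_term _ t₂⟩) using 1
    ext x
    simp [BoundedFormula.Realize]
  | rel R ts =>
    convert (h.relMap R).preimage_fun h.definable_domain h.surjOn
      fun i => realize_term _ (ts i) using 1
    ext x
    simp [BoundedFormula.Realize]
  | imp φ ψ hφ hψ =>
    convert (hφ.inter hψ.compl).compl using 1
    ext x
    simp
  | all φ hφ => exact h.definablePullback_realize_all hφ

theorem definablePullback_realize_formula (h : IsInterpretation L K A D f) (φ : K.Formula α) :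
    DefinablePullback L A D f {x : α → N | φ.Realize x} := by
  convert (h.definablePullback_realize_boundedFormula φ).preimage_comp
    (Sum.elim id finZeroElim) using 1
  ext x
  simp only [mem_ofPred_eq, Formula.Realize, Function.comp_assoc, Sum.elim_comp_inl,
    Function.comp_id]
  congr! 1

theorem definable_preimage [Finite α] {B : Set N} {S : Set (α → N)}
    (h : IsInterpretation L K A D f) (hBA : SurjOn f (D ∩ A) B) (hS : B.Definable K S) :
    A.Definable L {x : α → M | (∀ i, x i ∈ D) ∧ f ∘ x ∈ S} := by
  obtain ⟨φ, rfl⟩ := definable_iff_exists_formula_sum.1 hS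
  choose c hc hfc using fun b : B => hBA b.2
  refine DefinablePullback.definable_setOf ?_ h.definable_domain
  convert (h.definablePullback_realize_formula φ).preimage_term
    (t := Sum.elim (fun b => Term.var (Sum.inl ⟨c b, (hc b).2⟩)) fun i => Term.var (Sum.inr i))
    (g := Sum.elim (fun b _ => b) fun i z => z i)
    (Sum.forall.2 ⟨fun b => termInduces_param _ (hc b).1 (hfc b), termInduces_var⟩) using 3
  congr! 1
  funext j
  cases j <;> rfl

end IsInterpretation

end DefinablePullback

section Ring

variable {R β : Type*} [CommRing R] [CompatibleRing R] {A : Set R}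

theorem definable₁_compl_singleton_zero : A.Definable₁ Language.ring {0}ᶜ := by
  have hzero := definable_preimage_term (Definable.diagonal Language.ring A)
    ![Term.var (Sum.inr (0 : Fin 1)), 0]
  unfold Definable₁
  convert hzero.compl using 1
  ext x
  simp

theorem definable_isSquare_freeCommRing (P : FreeCommRing (A ⊕ β)) :
    A.Definable Language.ring {x : β → R | IsSquare (FreeCommRing.lift (Sum.elim (↑) x) P)} := by
  let w : Language.ring.Term (A ⊕ (β ⊕ Unit)) := Term.var (Sum.inr (Sum.inr ()))
  have hroot := (definable_preimage_term (Definable.diagonal Language.ring A)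
    ![(termOfFreeCommRing P).relabel (Sum.map id Sum.inl), w * w]).exists_of_finite
  convert hroot using 1
  ext x
  simp only [IsSquare, mem_ofPred_eq, mem_diagonal_iff, Matrix.cons_val_zero, Term.realize_relabel,
    realize_termOfFreeCommRing, Sum.elim_comp_map, Sum.elim_comp_inl, Function.comp_id,
    Matrix.cons_val_one, Matrix.cons_val_fin_one, realize_mul, Term.realize_var, Sum.elim_inr, w]
  exact ⟨fun ⟨r, hr⟩ => ⟨fun _ => r, hr⟩, fun ⟨u, hu⟩ => ⟨u (), hu⟩⟩

end Ring

section Padic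

variable {p : ℕ} [Fact p.Prime] {β : Type*}

theorem isSquare_one_add_of_norm_lt {c : ℤ_[p]} (hc : ‖c‖ < ‖(2 : ℤ_[p])‖ ^ 2) :
    IsSquare (1 + c) := by
  obtain ⟨w, hw, -⟩ := hensels_lemma (p := p) (R := ℤ_[p])
    (F := Polynomial.X ^ 2 - Polynomial.C (1 + c)) (a := 1)
    (by simpa [one_add_one_eq_two] using hc)
  have hw : w ^ 2 - (1 + c) = 0 := by simpa using hw
  exact isSquare_iff_exists_sq _ |>.2 ⟨w, (sub_eq_zero.1 hw).symm⟩

theorem padicInt_norm_p_le_norm_two : ‖(p : ℤ_[p])‖ ≤ ‖(2 : ℤ_[p])‖ := by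
  rcases eq_or_ne p 2 with rfl | hp2
  · exact le_rfl
  · have h2 : ‖((2 : ℕ) : ℤ_[p])‖ = 1 := PadicInt.norm_natCast_eq_one_iff.2
      ((Nat.coprime_primes Fact.out Nat.prime_two).2 hp2)
    exact (PadicInt.norm_le_one _).trans h2.ge

theorem isSquare_one_add_p_pow_three_mul (c : ℤ_[p]) : IsSquare (1 + (p : ℤ_[p]) ^ 3 * c) := by
  refine isSquare_one_add_of_norm_lt ?_
  have hp0 : 0 < ‖(p : ℤ_[p])‖ := norm_pos_iff.2 PadicInt.prime_p.ne_zero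
  have hp1 : ‖(p : ℤ_[p])‖ < 1 := PadicInt.norm_lt_one_iff_dvd _ |>.2 dvd_rfl
  calc ‖(p : ℤ_[p]) ^ 3 * c‖
      ≤ ‖(p : ℤ_[p])‖ ^ 3 := by
        rw [norm_mul, norm_pow]
        exact mul_le_of_le_one_right (by positivity) (PadicInt.norm_le_one c)
    _ < ‖(p : ℤ_[p])‖ ^ 2 := pow_lt_pow_right_of_lt_one₀ hp0 hp1 (by norm_num)
    _ ≤ ‖(2 : ℤ_[p])‖ ^ 2 := by gcongr; exact padicInt_norm_p_le_norm_two

theorem isSquare_pow_four_add_of_valuation_le {x y : ℚ_[p]} (hx : x ≠ 0) (hy : y ≠ 0)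
    (hxy : x.valuation ≤ y.valuation) : IsSquare (x ^ 4 + (p : ℚ_[p]) ^ 3 * y ^ 4) := by
  have hz : ‖y / x‖ ≤ 1 := by
    rw [Padic.norm_le_one_iff_val_nonneg, div_eq_mul_inv,
      Padic.valuation_mul hy (inv_ne_zero hx), Padic.valuation_inv]
    lia
  obtain ⟨z, hzxy⟩ : ∃ z : ℤ_[p], (z : ℚ_[p]) = y / x := ⟨⟨y / x, hz⟩, rfl⟩
  have hsq : IsSquare (1 + (p : ℚ_[p]) ^ 3 * (z : ℚ_[p]) ^ 4) := by
    obtain ⟨w, hw⟩ := isSquare_one_add_p_pow_three_mul (z ^ 4)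
    exact ⟨w, mod_cast congrArg ((↑) : ℤ_[p] → ℚ_[p]) hw⟩
  have hfactor : x ^ 4 + (p : ℚ_[p]) ^ 3 * y ^ 4 =
      (x ^ 2) ^ 2 * (1 + (p : ℚ_[p]) ^ 3 * (z : ℚ_[p]) ^ 4) := by
    rw [hzxy]
    field_simp
  exact hfactor ▸ (IsSquare.sq _).mul hsq

theorem even_valuation_of_isSquare {x : ℚ_[p]} (hx : IsSquare x) : Even x.valuation := by
  obtain ⟨w, rfl⟩ := hx
  rw [← sq, Padic.valuation_pow]
  exact even_two_mul _

theorem padic_valuation_add_eq_right {a b : ℚ_[p]} (ha : a ≠ 0) (hb : b ≠ 0)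
    (hba : b.valuation < a.valuation) : (a + b).valuation = b.valuation := by
  have hadd : Padic.addValuation (a + b) = (b.valuation : WithTop ℤ) := by
    rw [AddValuation.map_add_eq_of_lt_right _ (by simpa [ha, hb] using hba),
      Padic.addValuation.apply hb]
  have hab : a + b ≠ 0 := fun h0 => by simp [h0] at hadd
  exact_mod_cast (Padic.addValuation.apply hab).symm.trans hadd

theorem valuation_le_iff_isSquare {x y : ℚ_[p]} (hx : x ≠ 0) (hy : y ≠ 0) :
    x.valuation ≤ y.valuation ↔ IsSquare (x ^ 4 + (p : ℚ_[p]) ^ 3 * y ^ 4) := by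
  refine ⟨isSquare_pow_four_add_of_valuation_le hx hy, fun hsq => ?_⟩
  by_contra! hyx
  have hp : (p : ℚ_[p]) ≠ 0 := mod_cast (Fact.out : p.Prime).ne_zero
  have hvx : (x ^ 4).valuation = 4 * x.valuation := by simp
  have hvy : ((p : ℚ_[p]) ^ 3 * y ^ 4).valuation = 3 + 4 * y.valuation := by
    simp [Padic.valuation_mul, hp, hy]
  have hvsum : (x ^ 4 + (p : ℚ_[p]) ^ 3 * y ^ 4).valuation = 3 + 4 * y.valuation := by
    rw [padic_valuation_add_eq_right (by positivity) (by positivity) (by lia), hvy]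
  have heven := even_valuation_of_isSquare hsq
  grind

theorem padic_valuation_surjOn_image_zpow (B : Set ℤ) :
    SurjOn (Padic.valuation (p := p)) ({0}ᶜ ∩ ((p : ℚ_[p]) ^ ·) '' B) B := by
  intro b hb
  have hp : (p : ℚ_[p]) ≠ 0 := mod_cast (Fact.out : p.Prime).ne_zero
  exact ⟨(p : ℚ_[p]) ^ b, ⟨zpow_ne_zero b hp, mem_image_of_mem _ hb⟩, by simp⟩

variable [CompatibleRing (ℚ_[p])] {A : Set ℚ_[p]}

theorem definablePullback_valuation_le :
    DefinablePullback Language.ring A {0}ᶜ (Padic.valuation (p := p))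
      {x : Fin 2 → ℤ | x 0 ≤ x 1} := by
  let X (i : Fin 2) : FreeCommRing (A ⊕ Fin 2) := FreeCommRing.of (Sum.inr i)
  refine ⟨_, definable_isSquare_freeCommRing (X 0 ^ 4 + (p : FreeCommRing _) ^ 3 * X 1 ^ 4),
    fun x hx => ?_⟩
  simpa [X] using (valuation_le_iff_isSquare (hx 0) (hx 1)).symm

theorem definablePullback_valuation_lt :
    DefinablePullback Language.ring A {0}ᶜ (Padic.valuation (p := p))
      {x : Fin 2 → ℤ | x 0 < x 1} := by
  have hle := definablePullback_valuation_le (p := p) (A := A)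
  have hcompl : {x : Fin 2 → ℤ | x 0 < x 1} =
      {x | x ∘ ![1, 0] ∈ {x : Fin 2 → ℤ | x 0 ≤ x 1}}ᶜ := by
    ext x
    simp
  exact hcompl ▸ (hle.preimage_comp ![1, 0]).compl

theorem definablePullback_valuation_eq :
    DefinablePullback Language.ring A {0}ᶜ (Padic.valuation (p := p))
      {x : Fin 2 → ℤ | x 0 = x 1} := by
  have hle := definablePullback_valuation_le (p := p) (A := A)
  convert hle.inter (hle.preimage_comp ![1, 0]) using 1
  ext x
  simp [le_antisymm_iff]

theorem termInduces_valuation_one :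
    TermInduces A {0}ᶜ (Padic.valuation (p := p)) (1 : Language.ring.Term (A ⊕ β)) fun _ => 0 :=
  fun _ _ => by simp

theorem termInduces_valuation_p :
    TermInduces A {0}ᶜ (Padic.valuation (p := p)) (termOfFreeCommRing (p : FreeCommRing (A ⊕ β)))
      fun _ => 1 :=
  fun _ _ => by simp [(Fact.out : p.Prime).ne_zero]

theorem TermInduces.valuation_mul {s t : Language.ring.Term (A ⊕ β)} {g h : (β → ℤ) → ℤ}
    (hs : TermInduces A {0}ᶜ (Padic.valuation (p := p)) s g)
    (ht : TermInduces A {0}ᶜ (Padic.valuation (p := p)) t h) :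
    TermInduces A {0}ᶜ (Padic.valuation (p := p)) (s * t) fun z => g z + h z := by
  intro x hx
  obtain ⟨hs0, hsg⟩ := hs x hx
  obtain ⟨ht0, hth⟩ := ht x hx
  rw [realize_mul, Padic.valuation_mul hs0 ht0, hsg, hth]
  exact ⟨mul_ne_zero hs0 ht0, rfl⟩

theorem definablePullbackFun_presburger_funMap {n : ℕ} (F : Presburger.Functions n) :
    DefinablePullbackFun Language.ring A {0}ᶜ (Padic.valuation (p := p))
      fun x : Fin n → ℤ => Structure.funMap F x := by
  have h_eq := definablePullback_valuation_eq (p := p) (A := A)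
  cases F with
  | zero => exact (termInduces_var none).definablePullback_eq termInduces_valuation_one h_eq
  | one => exact (termInduces_var none).definablePullback_eq termInduces_valuation_p h_eq
  | add =>
    exact (termInduces_var none).definablePullback_eq
      ((termInduces_var (some 0)).valuation_mul (termInduces_var (some 1))) h_eq
  | sub =>
    have hsub : DefinablePullback Language.ring A {0}ᶜ (Padic.valuation (p := p))
        {z : Option (Fin 2) → ℤ | z none = z (some 0) - z (some 1)} := by
      simpa only [eq_sub_iff_add_eq] using
        ((termInduces_var none).valuation_mul (termInduces_var (some 1))).definablePullback_eq
          (termInduces_var (some 0)) h_eq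
    exact hsub

theorem isInterpretation_padic_valuation :
    IsInterpretation Language.ring Presburger A {0}ᶜ (Padic.valuation (p := p)) where
  definable_domain := definable₁_compl_singleton_zero
  surjOn := (padic_valuation_surjOn_image_zpow univ).mono inter_subset_left Subset.rfl
  eq := definablePullback_valuation_eq
  funMap := definablePullbackFun_presburger_funMap
  relMap := by
    rintro _ ⟨⟩
    exact definablePullback_valuation_lt

end Padic

theorem ord_preimage_ring_definable_general (p : ℕ) [Fact p.Prime] [CompatibleRing (ℚ_[p])]
    {α : Type*} [Finite α] {B : Set ℤ} {S : Set (α → ℤ)} (hS : B.Definable Presburger S) :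
    (((p : ℚ_[p]) ^ ·) '' B).Definable Language.ring
      {x : α → ℚ_[p] | (∀ i, x i ≠ 0) ∧ (fun i => (x i).valuation) ∈ S} :=
  isInterpretation_padic_valuation.definable_preimage (padic_valuation_surjOn_image_zpow B) hS

/-- For every Presburger-definable `S ⊆ ℤ^m`, the set
`ord⁻¹(S) = {x ∈ (ℚ_p \ {0})^m : (ord x₁, …, ord xₘ) ∈ S}` is definable with parameters in the
language of rings on `ℚ_p`. -/
theorem ord_preimage_ring_definable (p : ℕ) [Fact p.Prime] (m : ℕ)
    (S : Set (Fin m → ℤ)) (hS : (Set.univ : Set ℤ).Definable Presburger S) :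
    letI : Language.ring.Structure ℚ_[p] := (compatibleRingOfRing ℚ_[p]).toStructure
    (Set.univ : Set ℚ_[p]).Definable Language.ring
      {x : Fin m → ℚ_[p] | (∀ i, x i ≠ 0) ∧ (fun i => (x i).valuation) ∈ S} :=
  let := compatibleRingOfRing ℚ_[p]
  (ord_preimage_ring_definable_general p hS).mono (Set.subset_univ _)
end

section
/- Let p be a prime and let μ be the Haar measure on (ℚ_p, +) normalized so that μ(ℤ_p) = 1. Let a, b, k ∈ ℤ with a ≤ b, let N ≥ 1 and M ≥ 1 be integers, and let ξ ∈ (ℤ/p^M ℤ)^× be a unit. Let k₀ be the least integer n with n ≥ a and n ≡ k (mod N), and let k₁ be the least integer n with n ≥ b and n ≡ k (mod N). Then the set {x ∈ ℚ_p : x ≠ 0, a ≤ ord(x) < b, ord(x) ≡ k (mod N), ac_M(x) = ξ} has μ-measure p^{−M}·(p^{−k₀} − p^{−k₁}) / (1 − p^{−N}). -/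
open MeasureTheory
open scoped Classical

/-- The `M`-th angular component `ac_M : ℚ_p \ {0} → (ℤ/p^M ℤ)ˣ ⊆ ℤ/p^M ℤ`: for `x ≠ 0` with
`ord x = v`, write `x = p^v · u` with `u ∈ ℤ_pˣ`; then `ac_M x = u mod p^M` (and `ac_M 0 = 0`). -/
noncomputable def angularComponent (p : ℕ) [Fact p.Prime] (M : ℕ) (x : ℚ_[p]) : ZMod (p ^ M) :=
  if hx : x = 0 then 0
  else
    PadicInt.toZModPow M
      ⟨x * (p : ℚ_[p]) ^ (-x.valuation), le_of_eq <| by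
        rw [norm_mul, Padic.norm_eq_zpow_neg_valuation hx, Padic.norm_p_zpow, neg_neg,
          ← zpow_add₀ (by exact_mod_cast (Fact.out : p.Prime).ne_zero : (p : ℝ) ≠ 0),
          neg_add_cancel, zpow_zero]⟩

/-!
The unit ball of `ℚ_p` consists of `p` translates of its image under multiplication by `p`, so
multiplication by `p` scales Haar measure by `p⁻¹` and every closed ball of radius `p⁻ⁿ` has
measure `p⁻ⁿ`. If `u ∈ ℤ_pˣ` lifts `ξ`, then `{ord x = n, ac_M x = ξ}` is the closed ball of radius
`p^{-(n+M)}` around `u pⁿ`. Hence the measure sought is `p^{-M}` times the sum of `p⁻ⁿ` over the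
`n ≡ k (mod N)` in `[a, b)`, which is the difference of the geometric series starting at `k₀` and
at `k₁`.
-/

open Metric IsLocalRing
open scoped ENNReal NNReal Pointwise

section HaarMeasureOfBalls

variable {p : ℕ} [Fact p.Prime]

lemma padic_closedBall_zero_one_eq_biUnion_ball :
    closedBall (0 : ℚ_[p]) 1 = ⋃ i ∈ Finset.range p, ball (i : ℚ_[p]) 1 := by
  ext x
  simp only [mem_closedBall, Set.mem_iUnion, Finset.mem_range, exists_prop, mem_ball,
    dist_eq_norm, sub_zero]
  constructor
  · intro hx
    let y : ℤ_[p] := ⟨x, hx⟩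
    exact ⟨y.zmodRepr, y.zmodRepr_lt_p, y.norm_sub_zmodRepr_lt_one⟩
  · rintro ⟨i, -, hxi⟩
    have hi : ‖(i : ℚ_[p])‖ ≤ 1 := mod_cast Padic.norm_int_le_one (p := p) i
    simpa using (Padic.nonarchimedean (x - (i : ℚ_[p])) i).trans (max_le hxi.le hi)

lemma padic_pairwiseDisjoint_ball_natCast_one :
    (Finset.range p : Set ℕ).PairwiseDisjoint fun i ↦ ball (i : ℚ_[p]) 1 := by
  intro i hi j hj hij
  refine (IsUltrametricDist.ball_eq_or_disjoint _ _ _).resolve_left fun hball ↦ hij ?_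
  have hij_mem : (i : ℚ_[p]) ∈ ball (j : ℚ_[p]) 1 := hball ▸ mem_ball_self one_pos
  have hdvd : (p : ℤ) ∣ i - j := by
    rw [mem_ball, dist_eq_norm] at hij_mem
    exact Padic.norm_intCast_lt_one_iff.1 (mod_cast hij_mem)
  rw [Finset.coe_range, Set.mem_Iio] at hi hj
  have := Int.eq_zero_of_abs_lt_dvd hdvd (by rw [abs_lt]; omega)
  omega

lemma p_smul_closedBall_zero_one : (p : ℚ_[p]) • closedBall (0 : ℚ_[p]) 1 = ball 0 1 := by
  ext x
  have := Padic.norm_le_pow_iff_norm_lt_pow_add_one x (-1)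
  simpa [smul_unitClosedBall] using this

variable [MeasurableSpace ℚ_[p]] [BorelSpace ℚ_[p]] (μ : Measure ℚ_[p]) [μ.IsAddHaarMeasure]

lemma measure_closedBall_zero_one_eq_mul_measure_ball :
    μ (closedBall 0 1) = p * μ (ball 0 1) := by
  rw [padic_closedBall_zero_one_eq_biUnion_ball,
    measure_biUnion_finset padic_pairwiseDisjoint_ball_natCast_one fun _ _ ↦ measurableSet_ball]
  simp [Measure.addHaar_ball_center]

lemma measure_p_smul_closedBall_zero_one :
    μ ((p : ℚ_[p]) • closedBall (0 : ℚ_[p]) 1) = (p : ℝ≥0∞)⁻¹ * μ (closedBall 0 1) := by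
  have hp : (p : ℝ≥0∞) ≠ 0 := mod_cast (Fact.out : p.Prime).ne_zero
  rw [p_smul_closedBall_zero_one, measure_closedBall_zero_one_eq_mul_measure_ball,
    ENNReal.inv_mul_cancel_left' (by simp [hp]) (by simp)]

lemma measure_p_zpow_smul (n : ℤ) (s : Set ℚ_[p]) :
    μ ((p : ℚ_[p]) ^ n • s) = (p : ℝ≥0∞) ^ (-n) * μ s := by
  have hp : p ≠ 0 := (Fact.out : p.Prime).ne_zero
  let ϖ : ℚ_[p]ˣ := Units.mk0 p (mod_cast hp)
  have hϖ : distribHaarChar ℚ_[p] ϖ = (p : ℝ≥0)⁻¹ := by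
    refine distribHaarChar_eq_of_measure_smul_eq_mul (μ := μ) (s := closedBall 0 1)
      (measure_closedBall_pos μ 0 one_pos).ne' measure_closedBall_lt_top.ne ?_
    rw [ENNReal.coe_inv (mod_cast hp), ENNReal.coe_natCast]
    exact measure_p_smul_closedBall_zero_one μ
  calc μ ((p : ℚ_[p]) ^ n • s)
    _ = μ (ϖ ^ n • s) := by rw [Units.smul_def]; simp [ϖ]
    _ = distribHaarChar ℚ_[p] (ϖ ^ n) * μ s := (distribHaarChar_mul μ _ s).symm
    _ = (p : ℝ≥0∞) ^ (-n) * μ s := by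
      rw [map_zpow, hϖ, inv_zpow', ENNReal.coe_zpow (mod_cast hp), ENNReal.coe_natCast]

lemma measure_closedBall_p_zpow (hμ : μ (closedBall 0 1) = 1) (c : ℚ_[p]) (n : ℤ) :
    μ (closedBall c ((p : ℝ) ^ (-n))) = (p : ℝ≥0∞) ^ (-n) := by
  rw [Measure.addHaar_closedBall_center, ← Padic.norm_p_zpow, ← smul_unitClosedBall,
    measure_p_zpow_smul, hμ, mul_one]

end HaarMeasureOfBalls

section AngularComponent

variable {p : ℕ} [Fact p.Prime] {M : ℕ}

lemma toZModPow_eq_toZModPow_iff_norm_sub_le {x y : ℤ_[p]} :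
    PadicInt.toZModPow M x = PadicInt.toZModPow M y ↔ ‖x - y‖ ≤ (p : ℝ) ^ (-(M : ℤ)) := by
  rw [← sub_eq_zero, ← map_sub, ← RingHom.mem_ker, PadicInt.ker_toZModPow,
    ← PadicInt.norm_le_pow_iff_mem_span_pow]

lemma exists_units_toZModPow_eq (hM : M ≠ 0) (ξ : (ZMod (p ^ M))ˣ) :
    ∃ u : ℤ_[p]ˣ, PadicInt.toZModPow M (u : ℤ_[p]) = ξ := by
  have : Fact (1 < p ^ M) := ⟨Nat.one_lt_pow hM (Fact.out : p.Prime).one_lt⟩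
  have hsurj := ZMod.ringHom_surjective (PadicInt.toZModPow (p := p) M)
  have := hsurj.isLocalHom
  obtain ⟨u, hu⟩ := surjective_units_map_of_local_ringHom _ hsurj inferInstance ξ
  exact ⟨u, congrArg Units.val hu⟩

lemma angularComponent_eq_toZModPow_iff {x : ℚ_[p]} (hx : x ≠ 0) (y : ℤ_[p]) :
    angularComponent p M x = PadicInt.toZModPow M y ↔
      x ∈ closedBall (y * (p : ℚ_[p]) ^ x.valuation) ((p : ℝ) ^ (-(x.valuation + M))) := by
  have hp : (p : ℝ) ≠ 0 := mod_cast (Fact.out : p.Prime).ne_zero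
  have hpow : (p : ℚ_[p]) ^ x.valuation ≠ 0 := zpow_ne_zero _ (mod_cast hp)
  have hfactor : x - y * (p : ℚ_[p]) ^ x.valuation =
      (x * (p : ℚ_[p]) ^ (-x.valuation) - y) * (p : ℚ_[p]) ^ x.valuation := by
    rw [sub_mul, mul_assoc, zpow_neg, inv_mul_cancel₀ hpow, mul_one]
  rw [angularComponent, dif_neg hx, mem_closedBall, dist_eq_norm, hfactor, norm_mul,
    Padic.norm_p_zpow, neg_add_rev, zpow_add₀ hp, mul_le_mul_iff_left₀ (by positivity)]
  exact toZModPow_eq_toZModPow_iff_norm_sub_le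

lemma ne_zero_and_valuation_eq_of_norm_eq_zpow {x : ℚ_[p]} {n : ℤ} (hx : ‖x‖ = (p : ℝ) ^ (-n)) :
    x ≠ 0 ∧ x.valuation = n := by
  have hp : (1 : ℝ) < p := mod_cast (Fact.out : p.Prime).one_lt
  have hx0 : x ≠ 0 := norm_pos_iff.1 (hx ▸ zpow_pos (by positivity) _)
  rw [Padic.norm_eq_zpow_neg_valuation hx0] at hx
  exact ⟨hx0, neg_injective (zpow_right_injective₀ (by positivity) hp.ne' hx)⟩

lemma setOf_valuation_eq_and_angularComponent_eq (hM : M ≠ 0) (u : ℤ_[p]ˣ) (n : ℤ) :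
    {x : ℚ_[p] | x ≠ 0 ∧ x.valuation = n ∧
        angularComponent p M x = PadicInt.toZModPow M (u : ℤ_[p])} =
      closedBall ((u : ℤ_[p]) * (p : ℚ_[p]) ^ n) ((p : ℝ) ^ (-(n + M))) := by
  have hp : (1 : ℝ) < p := mod_cast (Fact.out : p.Prime).one_lt
  ext x
  constructor
  · rintro ⟨hx, rfl, hac⟩
    exact (angularComponent_eq_toZModPow_iff hx _).1 hac
  · intro hball
    have hcenter : ‖((u : ℤ_[p]) : ℚ_[p]) * (p : ℚ_[p]) ^ n‖ = (p : ℝ) ^ (-n) := by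
      rw [norm_mul, ← PadicInt.norm_def, PadicInt.norm_units, one_mul, Padic.norm_p_zpow]
    have hradius : (p : ℝ) ^ (-(n + M)) < (p : ℝ) ^ (-n) :=
      zpow_lt_zpow_right₀ hp (by omega)
    have hnorm : ‖x‖ = (p : ℝ) ^ (-n) := by
      rw [← hcenter] at hradius ⊢
      exact Padic.norm_eq_of_norm_sub_lt_right ((mem_closedBall_iff_norm.1 hball).trans_lt hradius)
    obtain ⟨hx, rfl⟩ := ne_zero_and_valuation_eq_of_norm_eq_zpow hnorm
    exact ⟨hx, rfl, (angularComponent_eq_toZModPow_iff hx _).2 hball⟩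

variable [MeasurableSpace ℚ_[p]] [BorelSpace ℚ_[p]] (μ : Measure ℚ_[p]) [μ.IsAddHaarMeasure]

lemma measure_valuation_mem_and_angularComponent_eq (hμ : μ (closedBall 0 1) = 1) (hM : M ≠ 0)
    (ξ : (ZMod (p ^ M))ˣ) (S : Set ℤ) :
    μ {x : ℚ_[p] | x ≠ 0 ∧ x.valuation ∈ S ∧ angularComponent p M x = ξ} =
      (p : ℝ≥0∞) ^ (-(M : ℤ)) * ∑' n : S, (p : ℝ≥0∞) ^ (-(n : ℤ)) := by
  have hp : (p : ℝ≥0∞) ≠ 0 := mod_cast (Fact.out : p.Prime).ne_zero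
  obtain ⟨u, hu⟩ := exists_units_toZModPow_eq hM ξ
  have hunion : {x : ℚ_[p] | x ≠ 0 ∧ x.valuation ∈ S ∧ angularComponent p M x = ξ} =
      ⋃ n : S, {x : ℚ_[p] | x ≠ 0 ∧ x.valuation = n ∧ angularComponent p M x = ξ} := by
    ext x
    simp
  have hdisj : Pairwise (Function.onFun Disjoint fun n : S ↦
      {x : ℚ_[p] | x ≠ 0 ∧ x.valuation = n ∧ angularComponent p M x = ξ}) := by
    refine fun m n hmn ↦ Set.disjoint_left.2 ?_
    rintro x ⟨-, hm, -⟩ ⟨-, hn, -⟩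
    exact hmn (Subtype.ext (hm.symm.trans hn))
  rw [hunion, measure_iUnion hdisj]
  · simp_rw [← hu, setOf_valuation_eq_and_angularComponent_eq hM, measure_closedBall_p_zpow μ hμ,
      neg_add_rev, ENNReal.zpow_add hp (ENNReal.natCast_ne_top p), ENNReal.tsum_mul_left]
  · intro n
    rw [← hu, setOf_valuation_eq_and_angularComponent_eq hM]
    exact measurableSet_closedBall

end AngularComponent

section ArithmeticProgression

variable {k k₀ k₁ a b : ℤ} {N : ℕ}

lemma setOf_le_and_modEq_eq_range (hk₀ : IsLeast {n : ℤ | a ≤ n ∧ n ≡ k [ZMOD N]} k₀) :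
    {n : ℤ | a ≤ n ∧ n ≡ k [ZMOD N]} = Set.range fun j : ℕ ↦ k₀ + N * (j : ℤ) := by
  obtain ⟨⟨hak₀, hk₀k⟩, hmin⟩ := hk₀
  ext n
  constructor
  · rintro ⟨han, hnk⟩
    obtain ⟨d, hd⟩ := Int.eq_ofNat_of_zero_le (sub_nonneg.2 (hmin ⟨han, hnk⟩))
    have hdvd : (N : ℤ) ∣ d := hd ▸ (hk₀k.trans hnk.symm).dvd
    obtain ⟨j, rfl⟩ := Int.natCast_dvd_natCast.1 hdvd
    exact ⟨j, by push_cast at hd; linarith⟩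
  · rintro ⟨j, rfl⟩
    exact ⟨hak₀.trans (le_add_of_nonneg_right (by positivity)), by simpa using hk₀k⟩

variable {q : ℝ≥0∞}

lemma tsum_zpow_of_le_and_modEq (hq : q ≠ 0) (hq' : q ≠ ∞) (hN : N ≠ 0)
    (hk₀ : IsLeast {n : ℤ | a ≤ n ∧ n ≡ k [ZMOD N]} k₀) :
    ∑' n : {n : ℤ | a ≤ n ∧ n ≡ k [ZMOD N]}, q ^ (n : ℤ) = q ^ k₀ / (1 - q ^ N) := by
  have hinj : Function.Injective fun j : ℕ ↦ k₀ + N * (j : ℤ) := fun i j h ↦ by simpa [hN] using h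
  calc ∑' n : {n : ℤ | a ≤ n ∧ n ≡ k [ZMOD N]}, q ^ (n : ℤ)
    _ = ∑' j : ℕ, q ^ (k₀ + N * (j : ℤ)) := by
      rw [setOf_le_and_modEq_eq_range hk₀]
      exact tsum_range (fun n : ℤ ↦ q ^ n) hinj
    _ = ∑' j : ℕ, q ^ k₀ * (q ^ N) ^ j := by
      simp_rw [ENNReal.zpow_add hq hq', ← pow_mul]
      norm_cast
    _ = q ^ k₀ / (1 - q ^ N) := by
      rw [ENNReal.tsum_mul_left, ENNReal.tsum_geometric, div_eq_mul_inv]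

lemma tsum_zpow_of_le_and_lt_and_modEq (hq : q ≠ 0) (hq1 : q < 1) (hN : N ≠ 0) (hab : a ≤ b)
    (hk₀ : IsLeast {n : ℤ | a ≤ n ∧ n ≡ k [ZMOD N]} k₀)
    (hk₁ : IsLeast {n : ℤ | b ≤ n ∧ n ≡ k [ZMOD N]} k₁) :
    ∑' n : {n : ℤ | a ≤ n ∧ n < b ∧ n ≡ k [ZMOD N]}, q ^ (n : ℤ) =
      (q ^ k₀ - q ^ k₁) / (1 - q ^ N) := by
  have hq' : q ≠ ∞ := hq1.ne_top
  have hden : 1 - q ^ N ≠ 0 := (tsub_pos_of_lt (pow_lt_one₀ zero_le hq1 hN)).ne'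
  have hsplit : {n : ℤ | a ≤ n ∧ n < b ∧ n ≡ k [ZMOD N]} ∪ {n | b ≤ n ∧ n ≡ k [ZMOD N]} =
      {n | a ≤ n ∧ n ≡ k [ZMOD N]} := by
    ext n
    simp only [Set.mem_union, Set.mem_ofPred_eq]
    grind
  have hdisj : Disjoint {n : ℤ | a ≤ n ∧ n < b ∧ n ≡ k [ZMOD N]} {n | b ≤ n ∧ n ≡ k [ZMOD N]} :=
    Set.disjoint_left.2 fun n hn hn' ↦ hn.2.1.not_ge hn'.1
  rw [ENNReal.sub_div fun _ _ ↦ hden, ← tsum_zpow_of_le_and_modEq hq hq' hN hk₀,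
    ← tsum_zpow_of_le_and_modEq hq hq' hN hk₁]
  refine ENNReal.eq_sub_of_add_eq ?_ ?_
  · rw [tsum_zpow_of_le_and_modEq hq hq' hN hk₁]
    exact ENNReal.div_ne_top (ENNReal.zpow_ne_top hq hq' _) hden
  · rw [← hsplit, ENNReal.summable.tsum_union_disjoint hdisj ENNReal.summable]

end ArithmeticProgression

/-- For the Haar measure `μ` on `ℚ_p` normalized so that `μ(ℤ_p) = 1`, if `k₀` (resp. `k₁`) is
the least integer `≥ a` (resp. `≥ b`) congruent to `k mod N`, then the set of `x ∈ ℚ_p` with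
`a ≤ ord x < b`, `ord x ≡ k (mod N)` and `ac_M x = ξ` has measure
`p^{-M}·(p^{-k₀} - p^{-k₁}) / (1 - p^{-N})`. -/
theorem measure_ord_between_and_mod_and_angularComponent_eq (p : ℕ) [Fact p.Prime]
    [MeasurableSpace ℚ_[p] ] [BorelSpace ℚ_[p] ]
    (μ : Measure ℚ_[p]) [μ.IsAddHaarMeasure] (hμ : μ {x : ℚ_[p] | ‖x‖ ≤ 1} = 1)
    (a b k : ℤ) (hab : a ≤ b) (N M : ℕ) (hN : 1 ≤ N) (hM : 1 ≤ M) (ξ : (ZMod (p ^ M))ˣ)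
    (k₀ : ℤ) (hk₀ : IsLeast {n : ℤ | a ≤ n ∧ n ≡ k [ZMOD (N : ℤ)]} k₀)
    (k₁ : ℤ) (hk₁ : IsLeast {n : ℤ | b ≤ n ∧ n ≡ k [ZMOD (N : ℤ)]} k₁) :
    μ {x : ℚ_[p] | x ≠ 0 ∧ a ≤ x.valuation ∧ x.valuation < b ∧
        x.valuation ≡ k [ZMOD (N : ℤ)] ∧ angularComponent p M x = (ξ : ZMod (p ^ M))} =
      (p : ENNReal) ^ (-(M : ℤ)) *
        ((p : ENNReal) ^ (-k₀) - (p : ENNReal) ^ (-k₁)) / (1 - (p : ENNReal) ^ (-(N : ℤ))) := by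
  have hp : 1 < (p : ℝ≥0∞) := mod_cast (Fact.out : p.Prime).one_lt
  have hμ' : μ (closedBall 0 1) = 1 := by simpa [closedBall, dist_eq_norm] using hμ
  have hmeasure := measure_valuation_mem_and_angularComponent_eq μ hμ' (Nat.ne_of_gt hM) ξ
    {n | a ≤ n ∧ n < b ∧ n ≡ k [ZMOD N]}
  have hsum := tsum_zpow_of_le_and_lt_and_modEq (q := (p : ℝ≥0∞)⁻¹) (by simp)
    (ENNReal.inv_lt_one.2 hp) (Nat.ne_of_gt hN) hab hk₀ hk₁
  simp only [ENNReal.inv_zpow', ← zpow_natCast] at hsum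
  simpa only [hsum, Set.mem_ofPred_eq, and_assoc, mul_div_assoc] using hmeasure
end
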